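/- arXiv:1607.01113 — 2 statements merged into one kernel-verified Lean document; each statement's English description precedes it below -/
import Mathlib

section
/- Let ν ∈ (−1/2,1), β > 5 and w(v) = (1+|v|)^β. There exists a constant C_β(ν) > 0, depending only on β and ν, such that for every measurable F₀ ≥ 0 with ∥wF₀∥_{L∞} < ∞ and every nonnegative mild solution F of the ES-BGK equation with initial datum F₀, setting t₁ = (4C_β(ν)∥wF₀∥_{L∞})^{−1}, one has ∥wF(t)∥_{L∞} ≤ 2∥wF₀∥_{L∞} for all t ∈ [0, t₁]. -/
open MeasureTheory Real Matrix ENNReal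

noncomputable section

/-- Velocity/position space `ℝ³`. -/
abbrev E3 : Type := EuclideanSpace ℝ (Fin 3)

/-- The normalized global Maxwellian `μ(v) = (2π)^{-3/2} exp(-|v|²/2)`. -/
def Mw (v : E3) : ℝ := (2 * π) ^ (-(3 : ℝ) / 2) * Real.exp (-‖v‖ ^ 2 / 2)

/-- Density `ρ = ∫ g dv`. -/
def dens (g : E3 → ℝ) : ℝ := ∫ v, g v

/-- Bulk velocity `u = ρ⁻¹ ∫ v g dv`. -/
def bulk (g : E3 → ℝ) : E3 := (dens g)⁻¹ • ∫ v, g v • v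

/-- Temperature `T = (3ρ)⁻¹ ∫ |v-u|² g dv`. -/
def temp (g : E3 → ℝ) : ℝ := (3 * dens g)⁻¹ * ∫ v, ‖v - bulk g‖ ^ 2 * g v

/-- Stress tensor `Θ = ρ⁻¹ ∫ (v-u)⊗(v-u) g dv`. -/
def stress (g : E3 → ℝ) : Matrix (Fin 3) (Fin 3) ℝ :=
  Matrix.of fun i j => (dens g)⁻¹ * ∫ v, (v - bulk g) i * (v - bulk g) j * g v

/-- Temperature tensor `𝒯_ν = (1-ν) T Id + ν Θ`. -/
def tempTensor (g : E3 → ℝ) (ν : ℝ) : Matrix (Fin 3) (Fin 3) ℝ :=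
  ((1 - ν) * temp g) • (1 : Matrix (Fin 3) (Fin 3) ℝ) + ν • stress g

/-- Anisotropic Gaussian `M_ν = ρ det(2π𝒯_ν)^{-1/2} exp(-½ (v-u)ᵀ𝒯_ν⁻¹(v-u))`. -/
def aGauss (g : E3 → ℝ) (ν : ℝ) (v : E3) : ℝ :=
  dens g / Real.sqrt (((2 * π) • tempTensor g ν).det) *
    Real.exp (-(1 / 2) *
      ((fun i => (v - bulk g) i) ⬝ᵥ ((tempTensor g ν)⁻¹ *ᵥ fun i => (v - bulk g) i)))

/-- Collision frequency `A_ν = ρT/(1-ν)`. -/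
def collFreq (g : E3 → ℝ) (ν : ℝ) : ℝ := dens g * temp g / (1 - ν)

/-- Weighted sup-norm `‖w f‖_{L^∞} = sup_{x,v} (1+|v|)^β f(x,v)`. -/
def wSup (β : ℝ) (f : E3 → E3 → ℝ) : ℝ :=
  ⨆ p : E3 × E3, (1 + ‖p.2‖) ^ β * f p.1 p.2

/-- Finiteness of the weighted sup-norm. -/
def WBdd (β : ℝ) (f : E3 → E3 → ℝ) : Prop :=
  BddAbove (Set.range fun p : E3 × E3 => (1 + ‖p.2‖) ^ β * f p.1 p.2)

/-- A (global-in-time) mild solution of the ES-BGK equation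
`∂ₜF + v·∇ₓF = A_ν (M_ν - F)` with initial datum `F₀`. -/
structure IsMildSolution (ν β : ℝ) (F₀ : E3 → E3 → ℝ) (F : ℝ → E3 → E3 → ℝ) : Prop where
  nonneg : ∀ t, 0 ≤ t → ∀ x v, 0 ≤ F t x v
  meas : ∀ t, 0 ≤ t → Measurable fun p : E3 × E3 => F t p.1 p.2
  integrable : ∀ t, 0 ≤ t → ∀ x, Integrable (F t x)
  moment2 : ∀ t, 0 ≤ t → ∀ x, Integrable fun v => ‖v‖ ^ 2 * F t x v
  dens_pos : ∀ t, 0 ≤ t → ∀ x, 0 < dens (F t x)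
  temp_pos : ∀ t, 0 ≤ t → ∀ x, 0 < temp (F t x)
  wnorm_bdd : ∀ t, 0 ≤ t → WBdd β (F t)
  wnorm_cont : ContinuousOn (fun t => wSup β (F t)) (Set.Ici 0)
  mild : ∀ t, 0 ≤ t → ∀ x v,
    F t x v = F₀ (x - t • v) v *
        Real.exp (-(∫ τ in (0 : ℝ)..t, collFreq (F τ (x - (t - τ) • v)) ν))
      + ∫ s in (0 : ℝ)..t,
          Real.exp (-(∫ τ in s..t, collFreq (F τ (x - (t - τ) • v)) ν)) *
            collFreq (F s (x - (t - s) • v)) ν * aGauss (F s (x - (t - s) • v)) ν v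

/-- The entropy functional `ℰ(F₀)`. -/
def entE (F₀ : E3 → E3 → ℝ) : ℝ :=
  (∫ p : E3 × E3, (F₀ p.1 p.2 * Real.log (F₀ p.1 p.2) - Mw p.2 * Real.log (Mw p.2)))
    + (3 / 2 * Real.log (2 * π) - 1) * (∫ p : E3 × E3, (F₀ p.1 p.2 - Mw p.2))
    + 1 / 2 * ∫ p : E3 × E3, ‖p.2‖ ^ 2 * (F₀ p.1 p.2 - Mw p.2)

/-- Componentwise absolute value of `∫ (1, v, |v|², v⊗v) (f - μ) dv`. -/
def momentGap (f : E3 → ℝ) : ℝ :=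
  |∫ v, (f v - Mw v)| ⊔ (⨆ i : Fin 3, |∫ v, v i * (f v - Mw v)|) ⊔
    |∫ v, ‖v‖ ^ 2 * (f v - Mw v)| ⊔
    ⨆ ij : Fin 3 × Fin 3, |∫ v, v ij.1 * v ij.2 * (f v - Mw v)|

/-- `N_q(g) = sup_v (1+|v|)^q g(v)`, valued in `ℝ≥0∞`. -/
def Nq (q : ℝ) (g : E3 → ℝ) : ℝ≥0∞ :=
  ⨆ v : E3, ENNReal.ofReal ((1 + ‖v‖) ^ q * g v)

end

namespace ESBGK

section Moments

variable {g : E3 → ℝ}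

lemma integrable_smul_self (h0 : Integrable g)
    (h2 : Integrable fun v => ‖v‖ ^ 2 * g v) : Integrable fun v => g v • v := by
  refine (h0.norm.add h2.norm).mono' (h0.aestronglyMeasurable.smul aestronglyMeasurable_id) ?_
  filter_upwards with v
  simp only [norm_smul, Pi.add_apply, norm_mul, norm_pow, norm_norm]
  nlinarith [norm_nonneg (g v), norm_nonneg v, sq_nonneg (‖v‖ - 1),
    mul_nonneg (norm_nonneg (g v)) (sq_nonneg (‖v‖ - 1)),
    mul_nonneg (norm_nonneg (g v)) (sq_nonneg ‖v‖)]

lemma norm_sub_sq_mul (g : E3 → ℝ) (u v : E3) : ‖v - u‖ ^ 2 * g v =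
    ‖v‖ ^ 2 * g v - 2 * inner ℝ u (g v • v) + ‖u‖ ^ 2 * g v := by
  rw [norm_sub_sq_real, inner_smul_right, real_inner_comm]
  ring

lemma integrable_norm_sub_sq (h0 : Integrable g)
    (h2 : Integrable fun v => ‖v‖ ^ 2 * g v) (u : E3) :
    Integrable fun v => ‖v - u‖ ^ 2 * g v := by
  have h1 := (integrable_smul_self h0 h2).const_inner (𝕜 := ℝ) u
  simp_rw [norm_sub_sq_mul]
  exact (h2.sub (h1.const_mul 2)).add (h0.const_mul (‖u‖ ^ 2))

lemma integral_smul_self (hρ : 0 < dens g) : ∫ v, g v • v = dens g • bulk g := by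
  rw [bulk, smul_inv_smul₀ hρ.ne']

lemma integral_norm_sub_bulk_sq (h0 : Integrable g)
    (h2 : Integrable fun v => ‖v‖ ^ 2 * g v) (hρ : 0 < dens g) :
    ∫ v, ‖v - bulk g‖ ^ 2 * g v = (∫ v, ‖v‖ ^ 2 * g v) - dens g * ‖bulk g‖ ^ 2 := by
  have hs := integrable_smul_self h0 h2
  have h1 := hs.const_inner (𝕜 := ℝ) (bulk g)
  have hd : Integrable fun v => ‖v‖ ^ 2 * g v - 2 * inner ℝ (bulk g) (g v • v) :=
    h2.sub (h1.const_mul 2)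
  simp_rw [norm_sub_sq_mul]
  rw [integral_add hd (h0.const_mul _),
    integral_sub h2 (h1.const_mul 2), integral_const_mul, integral_const_mul,
    integral_inner hs, integral_smul_self hρ, inner_smul_right, real_inner_self_eq_norm_sq]
  change _ - _ + _ * dens g = _
  ring

lemma three_dens_mul_temp (hρ : 0 < dens g) :
    3 * dens g * temp g = ∫ v, ‖v - bulk g‖ ^ 2 * g v := by
  rw [temp, mul_inv_cancel_left₀ (by positivity)]

lemma three_dens_mul_temp_le (h0 : Integrable g)
    (h2 : Integrable fun v => ‖v‖ ^ 2 * g v) (hρ : 0 < dens g) :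
    3 * dens g * temp g ≤ ∫ v, ‖v‖ ^ 2 * g v := by
  rw [three_dens_mul_temp hρ, integral_norm_sub_bulk_sq h0 h2 hρ]
  have := mul_nonneg hρ.le (sq_nonneg ‖bulk g‖)
  linarith

end Moments

section TemperatureTensor

variable {g : E3 → ℝ} {ν : ℝ}

lemma integrable_mul_coord (h0 : Integrable g)
    (h2 : Integrable fun v => ‖v‖ ^ 2 * g v) (u : E3) (i j : Fin 3) :
    Integrable fun v => (v - u) i * (v - u) j * g v := by
  refine (integrable_norm_sub_sq h0 h2 u).norm.mono' ?_ ?_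
  · refine (Continuous.aestronglyMeasurable ?_).mul h0.aestronglyMeasurable
    fun_prop
  filter_upwards with v
  rw [norm_mul, norm_mul, norm_mul, norm_pow, norm_norm, sq]
  gcongr
  · exact PiLp.norm_apply_le _ _
  · exact PiLp.norm_apply_le _ _

lemma stress_quadForm (h0 : Integrable g)
    (h2 : Integrable fun v => ‖v‖ ^ 2 * g v) (y : Fin 3 → ℝ) :
    y ⬝ᵥ (stress g *ᵥ y) =
      (dens g)⁻¹ * ∫ v, (∑ i, (v - bulk g) i * y i) ^ 2 * g v := by
  have e : (fun v => (∑ i, (v - bulk g) i * y i) ^ 2 * g v) = fun v =>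
      ∑ i, ∑ j, y i * y j * ((v - bulk g) i * (v - bulk g) j * g v) := by
    ext v
    rw [sq, Finset.sum_mul_sum, Finset.sum_mul]
    refine Finset.sum_congr rfl fun i _ => ?_
    rw [Finset.sum_mul]
    exact Finset.sum_congr rfl fun j _ => by ring
  have hi := integrable_mul_coord h0 h2 (bulk g)
  rw [e, integral_finsetSum _ fun i _ => integrable_finsetSum _ fun j _ =>
    (hi i j).const_mul (y i * y j)]
  simp_rw [integral_finsetSum _ fun j _ => (hi _ j).const_mul (y _ * y j), integral_const_mul]
  simp only [dotProduct, mulVec, stress, Matrix.of_apply, Finset.mul_sum]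
  exact Finset.sum_congr rfl fun i _ => Finset.sum_congr rfl fun j _ => by ring

lemma stress_quadForm_nonneg (hg : ∀ v, 0 ≤ g v) (h0 : Integrable g)
    (h2 : Integrable fun v => ‖v‖ ^ 2 * g v) (hρ : 0 < dens g) (y : Fin 3 → ℝ) :
    0 ≤ y ⬝ᵥ (stress g *ᵥ y) := by
  rw [stress_quadForm h0 h2]
  exact mul_nonneg (inv_nonneg.2 hρ.le)
    (integral_nonneg fun v => mul_nonneg (sq_nonneg _) (hg v))

lemma stress_quadForm_le (hg : ∀ v, 0 ≤ g v) (h0 : Integrable g)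
    (h2 : Integrable fun v => ‖v‖ ^ 2 * g v) (hρ : 0 < dens g) (y : Fin 3 → ℝ) :
    y ⬝ᵥ (stress g *ᵥ y) ≤ 3 * temp g * (y ⬝ᵥ y) := by
  have key : ∫ v, (∑ i, (v - bulk g) i * y i) ^ 2 * g v ≤
      ∫ v, (y ⬝ᵥ y) * (‖v - bulk g‖ ^ 2 * g v) := by
    refine integral_mono_of_nonneg (.of_forall fun v => mul_nonneg (sq_nonneg _) (hg v))
      ((integrable_norm_sub_sq h0 h2 _).const_mul _) (.of_forall fun v => ?_)
    have cs := Finset.sum_mul_sq_le_sq_mul_sq Finset.univ (fun i => (v - bulk g) i) y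
    have e : y ⬝ᵥ y = ∑ i, y i ^ 2 := Finset.sum_congr rfl fun i _ => (sq _).symm
    simp only [EuclideanSpace.real_norm_sq_eq, e]
    nlinarith [mul_le_mul_of_nonneg_right cs (hg v)]
  rw [integral_const_mul, ← three_dens_mul_temp hρ] at key
  rw [stress_quadForm h0 h2, inv_mul_le_iff₀ hρ]
  linarith

lemma tempTensor_quadForm (y : Fin 3 → ℝ) :
    y ⬝ᵥ (tempTensor g ν *ᵥ y) =
      (1 - ν) * temp g * (y ⬝ᵥ y) + ν * (y ⬝ᵥ (stress g *ᵥ y)) := by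
  simp [tempTensor, Matrix.add_mulVec, Matrix.smul_mulVec, dotProduct_add]

lemma le_tempTensor_quadForm (hg : ∀ v, 0 ≤ g v) (h0 : Integrable g)
    (h2 : Integrable fun v => ‖v‖ ^ 2 * g v) (hρ : 0 < dens g) (hT : 0 < temp g)
    (y : Fin 3 → ℝ) :
    min (1 - ν) (1 + 2 * ν) * temp g * (y ⬝ᵥ y) ≤ y ⬝ᵥ (tempTensor g ν *ᵥ y) := by
  have hy : 0 ≤ temp g * (y ⬝ᵥ y) :=
    mul_nonneg hT.le (Finset.sum_nonneg fun i _ => mul_self_nonneg _)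
  have lo := stress_quadForm_nonneg hg h0 h2 hρ y
  have hi := stress_quadForm_le hg h0 h2 hρ y
  rw [tempTensor_quadForm]
  rcases le_total 0 ν with h | h
  · nlinarith [mul_le_mul_of_nonneg_right (min_le_left (1 - ν) (1 + 2 * ν)) hy, mul_nonneg h lo]
  · nlinarith [mul_le_mul_of_nonneg_right (min_le_right (1 - ν) (1 + 2 * ν)) hy,
      mul_le_mul_of_nonpos_left hi h]

lemma tempTensor_quadForm_le (hν1 : -(1 / 2 : ℝ) < ν) (hν2 : ν < 1)
    (hg : ∀ v, 0 ≤ g v) (h0 : Integrable g)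
    (h2 : Integrable fun v => ‖v‖ ^ 2 * g v) (hρ : 0 < dens g) (hT : 0 < temp g)
    (y : Fin 3 → ℝ) :
    y ⬝ᵥ (tempTensor g ν *ᵥ y) ≤ 3 * temp g * (y ⬝ᵥ y) := by
  have hy : 0 ≤ temp g * (y ⬝ᵥ y) :=
    mul_nonneg hT.le (Finset.sum_nonneg fun i _ => mul_self_nonneg _)
  have lo := stress_quadForm_nonneg hg h0 h2 hρ y
  have hi := stress_quadForm_le hg h0 h2 hρ y
  rw [tempTensor_quadForm]
  rcases le_total 0 ν with h | h
  · nlinarith [mul_le_mul_of_nonneg_left hi h]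
  · nlinarith [mul_nonneg (neg_nonneg.2 h) lo]

lemma tempTensor_isHermitian : (tempTensor g ν).IsHermitian := by
  refine Matrix.IsHermitian.ext fun i j => ?_
  simp only [tempTensor, stress, Matrix.add_apply, Matrix.smul_apply, Matrix.of_apply,
    star_trivial, Matrix.one_apply, eq_comm (a := i) (b := j)]
  simp only [mul_comm ((_ : E3) i)]

end TemperatureTensor

section QuadraticForms

variable {n : Type*} [Fintype n] [DecidableEq n] {A : Matrix n n ℝ}

lemma pow_card_le_det (hA : A.IsHermitian) {a : ℝ} (ha : 0 ≤ a)
    (h : ∀ y, a * (y ⬝ᵥ y) ≤ y ⬝ᵥ (A *ᵥ y)) : a ^ Fintype.card n ≤ A.det := by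
  rw [hA.det_eq_prod_eigenvalues, ← Finset.card_univ, ← Finset.prod_const]
  refine Finset.prod_le_prod (fun _ _ => ha) fun i _ => ?_
  have hi := h (hA.eigenvectorBasis i)
  rw [hA.mulVec_eigenvectorBasis, dotProduct_smul, smul_eq_mul] at hi
  have e : (hA.eigenvectorBasis i : n → ℝ) ⬝ᵥ (hA.eigenvectorBasis i : n → ℝ) = 1 := by
    have := hA.eigenvectorBasis.orthonormal.1 i
    rw [← sq_eq_sq₀ (norm_nonneg _) zero_le_one, EuclideanSpace.real_norm_sq_eq] at this
    rw [one_pow] at this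
    simpa [dotProduct, sq] using this
  rw [e] at hi
  simpa using hi

lemma div_le_inv_quadForm (hA : A.IsHermitian) (hdet : IsUnit A.det) {b : ℝ} (hb : 0 < b)
    (hpos : ∀ y, 0 ≤ y ⬝ᵥ (A *ᵥ y)) (h : ∀ y, y ⬝ᵥ (A *ᵥ y) ≤ b * (y ⬝ᵥ y)) (x : n → ℝ) :
    (x ⬝ᵥ x) / b ≤ x ⬝ᵥ (A⁻¹ *ᵥ x) := by
  set z := A⁻¹ *ᵥ x with hz
  have hx : A *ᵥ z = x := by rw [hz, mulVec_mulVec, Matrix.mul_nonsing_inv _ hdet, one_mulVec]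
  have hsymm : z ⬝ᵥ (A *ᵥ x) = x ⬝ᵥ x := by
    rw [dotProduct_mulVec, ← mulVec_transpose]
    have : Aᵀ = A := by simpa using hA.eq
    rw [this, hx]
  have h1 := hpos (z - b⁻¹ • x)
  have h2 := h x
  simp only [mulVec_sub, mulVec_smul, hx, sub_dotProduct, dotProduct_sub, smul_dotProduct,
    dotProduct_smul, smul_eq_mul, hsymm] at h1
  rw [dotProduct_comm z x] at h1
  have h3 : b⁻¹ * (b⁻¹ * (x ⬝ᵥ (A *ᵥ x))) ≤ b⁻¹ * (b⁻¹ * (b * (x ⬝ᵥ x))) := by gcongr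
  rw [inv_mul_cancel_left₀ hb.ne'] at h3
  rw [div_eq_inv_mul]
  linarith

end QuadraticForms

/-- The anisotropic Gaussian is dominated by an isotropic one with the same mean. -/
lemma aGauss_le {g : E3 → ℝ} {ν : ℝ} (hν1 : -(1 / 2 : ℝ) < ν) (hν2 : ν < 1)
    (hg : ∀ v, 0 ≤ g v) (h0 : Integrable g)
    (h2 : Integrable fun v => ‖v‖ ^ 2 * g v) (hρ : 0 < dens g) (hT : 0 < temp g) (v : E3) :
    aGauss g ν v ≤ dens g / √((min (1 - ν) (1 + 2 * ν) * temp g) ^ 3) *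
      Real.exp (-(‖v - bulk g‖ ^ 2 / (6 * temp g))) := by
  have hc : 0 < min (1 - ν) (1 + 2 * ν) * temp g :=
    mul_pos (lt_min (by linarith) (by linarith)) hT
  have lo := le_tempTensor_quadForm (ν := ν) hg h0 h2 hρ hT
  have hdet := pow_card_le_det tempTensor_isHermitian hc.le lo
  rw [Fintype.card_fin] at hdet
  have hdet0 := (pow_pos hc 3).trans_le hdet
  have hq := div_le_inv_quadForm tempTensor_isHermitian hdet0.ne'.isUnit
    (b := 3 * temp g) (by positivity)
    (fun y => (mul_nonneg hc.le (Finset.sum_nonneg fun i _ => mul_self_nonneg _)).trans (lo y))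
    (tempTensor_quadForm_le hν1 hν2 hg h0 h2 hρ hT) (fun i => (v - bulk g) i)
  have e : (fun i => (v - bulk g) i) ⬝ᵥ (fun i => (v - bulk g) i) = ‖v - bulk g‖ ^ 2 := by
    rw [EuclideanSpace.real_norm_sq_eq]
    exact Finset.sum_congr rfl fun i _ => (sq _).symm
  rw [e] at hq
  unfold aGauss
  gcongr
  · rw [Matrix.det_smul, Fintype.card_fin]
    have : (1 : ℝ) ≤ (2 * π) ^ 3 := one_le_pow₀ (by linarith [Real.pi_gt_three])
    nlinarith
  · have : ‖v - bulk g‖ ^ 2 / (6 * temp g) = 1 / 2 * (‖v - bulk g‖ ^ 2 / (3 * temp g)) := by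
      field_simp; ring
    rw [this]
    linarith

section MomentBounds

variable {g : E3 → ℝ} {β N : ℝ}

lemma integrable_weight (hβ : 5 < β) : Integrable fun v : E3 => (1 + ‖v‖) ^ (2 - β) := by
  have := integrable_one_add_norm (E := E3) (μ := volume) (r := β - 2)
    (by simp; linarith)
  simpa using this

lemma weight_integral_nonneg (β : ℝ) : 0 ≤ ∫ v : E3, (1 + ‖v‖) ^ (2 - β) :=
  integral_nonneg fun v => by positivity

lemma le_weight_inv (hN : ∀ v, (1 + ‖v‖) ^ β * g v ≤ N) (v : E3) :
    g v ≤ N * (1 + ‖v‖) ^ (-β) := by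
  rw [Real.rpow_neg (by positivity), ← div_eq_mul_inv, le_div_iff₀ (by positivity), mul_comm]
  exact hN v

/-- The pressure is controlled by the weighted sup-norm. -/
lemma dens_mul_temp_le (hβ : 5 < β) (hg : ∀ v, 0 ≤ g v) (h0 : Integrable g)
    (h2 : Integrable fun v => ‖v‖ ^ 2 * g v) (hρ : 0 < dens g)
    (hN : ∀ v, (1 + ‖v‖) ^ β * g v ≤ N) :
    3 * dens g * temp g ≤ N * ∫ v : E3, (1 + ‖v‖) ^ (2 - β) := by
  refine (three_dens_mul_temp_le h0 h2 hρ).trans ?_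
  rw [← integral_const_mul]
  refine integral_mono h2 ((integrable_weight hβ).const_mul _) fun v => ?_
  calc ‖v‖ ^ 2 * g v ≤ (1 + ‖v‖) ^ 2 * (N * (1 + ‖v‖) ^ (-β)) := by
        gcongr
        · exact hg v
        · linarith
        · exact le_weight_inv hN v
    _ = N * (1 + ‖v‖) ^ (2 - β) := by
        rw [sub_eq_add_neg, Real.rpow_add (by positivity), Real.rpow_two]; ring

lemma dens_mul_rpow_temp_le (hβ : 5 < β) (hg : ∀ v, 0 ≤ g v) (h0 : Integrable g)
    (h2 : Integrable fun v => ‖v‖ ^ 2 * g v) (hρ : 0 < dens g)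
    (hN : ∀ v, (1 + ‖v‖) ^ β * g v ≤ N) {σ : ℝ} (hσ : 0 < σ) (hT : temp g = σ ^ 2) :
    dens g * σ ^ (β - 3) ≤ 2 ^ (β - 2) * (∫ v : E3, (1 + ‖v‖) ^ (2 - β)) * N := by
  have hN0 : 0 ≤ N := (mul_nonneg (by positivity) (hg 0)).trans (hN 0)
  set K := ∫ v : E3, (1 + ‖v‖) ^ (2 - β) with hK
  have hsc : Integrable fun v : E3 => (1 + ‖σ⁻¹ • v‖) ^ (2 - β) :=
    (integrable_weight hβ).comp_smul (inv_ne_zero hσ.ne')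
  have hsc' : ∫ v : E3, (1 + ‖σ⁻¹ • v‖) ^ (2 - β) = σ ^ 3 * K := by
    rw [Measure.integral_comp_smul volume (fun v : E3 => (1 + ‖v‖) ^ (2 - β))]
    simp [abs_of_pos hσ, hK]
  have hpt : ∀ v : E3, ‖v‖ ^ 2 * g v ≤
      σ ^ 2 * g v + N * 2 ^ (β - 2) * σ ^ (2 - β) * (1 + ‖σ⁻¹ • v‖) ^ (2 - β) := by
    intro v
    rcases le_total ‖v‖ σ with h | h
    · have : ‖v‖ ^ 2 * g v ≤ σ ^ 2 * g v := by gcongr; exact hg v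
      have : 0 ≤ N * 2 ^ (β - 2) * σ ^ (2 - β) * (1 + ‖σ⁻¹ • v‖) ^ (2 - β) := by positivity
      linarith
    · have hv : 0 < ‖v‖ := hσ.trans_le h
      have h1 : g v ≤ N * ‖v‖ ^ (-β) := by
        refine (le_weight_inv hN v).trans ?_
        gcongr ?_ * ?_
        exact Real.rpow_le_rpow_of_nonpos hv (by linarith) (by linarith)
      have h3 : ‖v‖ ^ (2 - β) ≤ ((σ + ‖v‖) / 2) ^ (2 - β) :=
        Real.rpow_le_rpow_of_nonpos (by positivity) (by linarith) (by linarith)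
      have h4 : ((σ + ‖v‖) / 2) ^ (2 - β) =
          2 ^ (β - 2) * σ ^ (2 - β) * (1 + ‖σ⁻¹ • v‖) ^ (2 - β) := by
        have e : (σ + ‖v‖) / 2 = 2⁻¹ * σ * (1 + ‖σ⁻¹ • v‖) := by
          rw [norm_smul, norm_inv, Real.norm_of_nonneg hσ.le]; field_simp
        rw [e, Real.mul_rpow (by positivity) (by positivity),
          Real.mul_rpow (by positivity) (by positivity), Real.inv_rpow (by positivity),
          ← Real.rpow_neg (by positivity), neg_sub]
      calc ‖v‖ ^ 2 * g v ≤ ‖v‖ ^ 2 * (N * ‖v‖ ^ (-β)) := by gcongr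
        _ = N * ‖v‖ ^ (2 - β) := by
            rw [sub_eq_add_neg, Real.rpow_add hv, Real.rpow_two]; ring
        _ ≤ N * (2 ^ (β - 2) * σ ^ (2 - β) * (1 + ‖σ⁻¹ • v‖) ^ (2 - β)) := by
            rw [← h4]; gcongr
        _ ≤ _ := by nlinarith [mul_nonneg (sq_nonneg σ) (hg v)]
  have hint : ∫ v, ‖v‖ ^ 2 * g v ≤
      σ ^ 2 * dens g + N * 2 ^ (β - 2) * σ ^ (2 - β) * (σ ^ 3 * K) := by
    refine (integral_mono h2 ((h0.const_mul _).add (hsc.const_mul _)) hpt).trans_eq ?_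
    simp only [Pi.add_apply]
    rw [integral_add (h0.const_mul _) (hsc.const_mul _), integral_const_mul, integral_const_mul,
      hsc', dens]
  have hmain := (three_dens_mul_temp_le h0 h2 hρ).trans hint
  rw [hT] at hmain
  have e1 : σ ^ (2 - β) * σ ^ 3 * σ ^ (β - 3) = σ ^ 2 := by
    rw [← Real.rpow_natCast, ← Real.rpow_natCast, ← Real.rpow_add hσ, ← Real.rpow_add hσ]
    congr 1; push_cast; ring
  have h5 : σ ^ 2 * (dens g * σ ^ (β - 3)) ≤ σ ^ 2 * (2 ^ (β - 2) * K * N) := by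
    have h6 : dens g * σ ^ 2 ≤ N * 2 ^ (β - 2) * σ ^ (2 - β) * (σ ^ 3 * K) := by
      nlinarith [mul_nonneg hρ.le (sq_nonneg σ)]
    calc σ ^ 2 * (dens g * σ ^ (β - 3)) = dens g * σ ^ 2 * σ ^ (β - 3) := by ring
      _ ≤ N * 2 ^ (β - 2) * σ ^ (2 - β) * (σ ^ 3 * K) * σ ^ (β - 3) := by gcongr
      _ = (σ ^ (2 - β) * σ ^ 3 * σ ^ (β - 3)) * (2 ^ (β - 2) * K * N) := by ring
      _ = _ := by rw [e1]
  exact le_of_mul_le_mul_left h5 (by positivity)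

/-- If `g` is bounded by `S` on the ball of radius `3√T` about the bulk velocity, then
`ρ T^{-3/2}` is bounded by a multiple of `S`. -/
lemma dens_le_of_le_on_ball (hg : ∀ v, 0 ≤ g v) (h0 : Integrable g)
    (h2 : Integrable fun v => ‖v‖ ^ 2 * g v) (hρ : 0 < dens g) {σ : ℝ} (hσ : 0 < σ)
    (hT : temp g = σ ^ 2) {S : ℝ}
    (hS : ∀ v ∈ Metric.ball (bulk g) (3 * σ), g v ≤ S) :
    dens g ≤ 81 / 2 * volume.real (Metric.ball (0 : E3) 1) * S * σ ^ 3 := by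
  have hvol : volume.real (Metric.ball (bulk g) (3 * σ)) =
      27 * σ ^ 3 * volume.real (Metric.ball (0 : E3) 1) := by
    rw [Measure.real, Measure.addHaar_ball volume (bulk g) (by positivity : 0 ≤ 3 * σ),
      ENNReal.toReal_mul, ENNReal.toReal_ofReal (by positivity), finrank_euclideanSpace_fin,
      Measure.real]
    ring
  have hball : Integrable ((Metric.ball (bulk g) (3 * σ)).indicator fun _ => S) :=
    (integrable_indicator_iff measurableSet_ball).2
      (integrableOn_const measure_ball_lt_top.ne)
  have hsub := (integrable_norm_sub_sq h0 h2 (bulk g)).const_mul (9 * σ ^ 2)⁻¹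
  have hpt : ∀ v, g v ≤ (9 * σ ^ 2)⁻¹ * (‖v - bulk g‖ ^ 2 * g v) +
      (Metric.ball (bulk g) (3 * σ)).indicator (fun _ => S) v := by
    intro v
    by_cases hv : v ∈ Metric.ball (bulk g) (3 * σ)
    · rw [Set.indicator_of_mem hv]
      have := mul_nonneg (sq_nonneg ‖v - bulk g‖) (hg v)
      have : 0 ≤ (9 * σ ^ 2)⁻¹ * (‖v - bulk g‖ ^ 2 * g v) := by positivity
      linarith [hS v hv]
    · rw [Set.indicator_of_notMem hv, add_zero, le_inv_mul_iff₀ (by positivity)]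
      rw [mem_ball_iff_norm, not_lt] at hv
      have : (3 * σ) ^ 2 ≤ ‖v - bulk g‖ ^ 2 := by gcongr
      nlinarith [hg v]
  have hint := integral_mono h0 (hsub.add hball) hpt
  simp only [Pi.add_apply] at hint
  rw [integral_add hsub hball, integral_const_mul, ← three_dens_mul_temp hρ, hT,
    integral_indicator measurableSet_ball, setIntegral_const, hvol, smul_eq_mul] at hint
  change dens g ≤ _ at hint
  have e : (9 * σ ^ 2)⁻¹ * (3 * dens g * σ ^ 2) = dens g / 3 := by field_simp; norm_num
  rw [e] at hint
  linarith

lemma dens_mul_rpow_bulk_le (hβ : 5 < β) : ∃ C : ℝ, 0 ≤ C ∧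
    ∀ (g : E3 → ℝ) (N : ℝ), (∀ v, 0 ≤ g v) → Integrable g →
      Integrable (fun v => ‖v‖ ^ 2 * g v) → 0 < dens g →
      (∀ v, (1 + ‖v‖) ^ β * g v ≤ N) → ∀ σ : ℝ, 0 < σ → temp g = σ ^ 2 →
      dens g * (1 + ‖bulk g‖) ^ β ≤ C * N * σ ^ 3 := by
  set V := volume.real (Metric.ball (0 : E3) 1)
  have hK := weight_integral_nonneg β
  set K := ∫ v : E3, (1 + ‖v‖) ^ (2 - β)
  have hV : 0 ≤ V := measureReal_nonneg
  refine ⟨81 / 2 * V * 2 ^ β + 6 ^ β * (2 ^ (β - 2) * K), by positivity, ?_⟩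
  intro g N hg h0 h2 hρ hN σ hσ hT
  have hN0 : 0 ≤ N := (mul_nonneg (by positivity) (hg 0)).trans (hN 0)
  set U := 1 + ‖bulk g‖ with hU
  have hU0 : 0 < U := by positivity
  rcases le_total (3 * σ) (U / 2) with h | h
  · have hd := dens_le_of_le_on_ball hg h0 h2 hρ hσ hT (S := N * (U / 2) ^ (-β))
      fun v hv => by
        refine (le_weight_inv hN v).trans ?_
        gcongr ?_ * ?_
        refine Real.rpow_le_rpow_of_nonpos (by positivity) ?_ (by linarith)
        rw [mem_ball_iff_norm'] at hv
        have := norm_sub_norm_le (bulk g) v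
        linarith
    have e : (U / 2) ^ (-β) * U ^ β = 2 ^ β := by
      rw [Real.rpow_neg (by positivity), Real.div_rpow hU0.le (by norm_num)]
      field_simp
    calc dens g * U ^ β ≤ 81 / 2 * V * (N * (U / 2) ^ (-β)) * σ ^ 3 * U ^ β := by gcongr
      _ = 81 / 2 * V * ((U / 2) ^ (-β) * U ^ β) * N * σ ^ 3 := by ring
      _ = 81 / 2 * V * 2 ^ β * N * σ ^ 3 := by rw [e]
      _ ≤ _ := by
        have : 0 ≤ 6 ^ β * (2 ^ (β - 2) * K) * N * σ ^ 3 := by positivity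
        linarith
  · have hd := dens_mul_rpow_temp_le hβ hg h0 h2 hρ hN hσ hT
    have h3 : U ^ β ≤ (6 * σ) ^ β := Real.rpow_le_rpow hU0.le (by linarith) (by linarith)
    have e : (6 * σ) ^ β = 6 ^ β * (σ ^ (β - 3) * σ ^ 3) := by
      rw [Real.mul_rpow (by norm_num) hσ.le, ← Real.rpow_natCast σ 3, ← Real.rpow_add hσ]
      norm_num
    calc dens g * U ^ β ≤ dens g * (6 * σ) ^ β := by gcongr
      _ = 6 ^ β * (dens g * σ ^ (β - 3)) * σ ^ 3 := by rw [e]; ring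
      _ ≤ 6 ^ β * (2 ^ (β - 2) * K * N) * σ ^ 3 := by gcongr
      _ ≤ _ := by
        have : 0 ≤ 81 / 2 * V * 2 ^ β * N * σ ^ 3 := by positivity
        linarith

end MomentBounds

lemma exists_rpow_mul_exp_le {β : ℝ} (hβ : 0 ≤ β) :
    ∃ C : ℝ, 0 ≤ C ∧ ∀ y : ℝ, 0 ≤ y → y ^ β * Real.exp (-(y ^ 2 / 6)) ≤ C := by
  set n := ⌈β⌉₊
  refine ⟨1 + 6 ^ n * n.factorial, by positivity, fun y hy => ?_⟩
  rw [Real.exp_neg, ← div_eq_mul_inv, div_le_iff₀ (Real.exp_pos _)]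
  have h1 : 1 ≤ Real.exp (y ^ 2 / 6) := Real.one_le_exp (by positivity)
  have h2 := Real.pow_div_factorial_le_exp (y ^ 2 / 6) (by positivity) n
  have h3 : (y ^ 2) ^ n ≤ 6 ^ n * n.factorial * Real.exp (y ^ 2 / 6) := by
    rw [div_pow, div_div, div_le_iff₀ (by positivity)] at h2
    linarith
  have h4 : y ^ β ≤ 1 + (y ^ 2) ^ n := by
    rcases le_total y 1 with h | h
    · have := Real.rpow_le_one hy h hβ
      have : 0 ≤ (y ^ 2) ^ n := by positivity
      linarith
    · have : y ^ β ≤ y ^ (n : ℝ) := Real.rpow_le_rpow_of_exponent_le h (Nat.le_ceil β)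
      rw [Real.rpow_natCast] at this
      have h5 : y ^ n ≤ (y ^ 2) ^ n := by gcongr; nlinarith
      linarith
  linarith

/-- Weighted bound for the gain term, quadratic in the weighted sup-norm. -/
lemma exists_gain_le {ν β : ℝ} (hν1 : -(1 / 2 : ℝ) < ν) (hν2 : ν < 1) (hβ : 5 < β) :
    ∃ C : ℝ, 0 < C ∧ ∀ (g : E3 → ℝ) (N : ℝ), (∀ v, 0 ≤ g v) → Integrable g →
      Integrable (fun v => ‖v‖ ^ 2 * g v) → 0 < dens g → 0 < temp g →
      (∀ v, (1 + ‖v‖) ^ β * g v ≤ N) → ∀ v,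
      (1 + ‖v‖) ^ β * (collFreq g ν * aGauss g ν v) ≤ C * N ^ 2 := by
  obtain ⟨C₁, hC₁, H₁⟩ := dens_mul_rpow_bulk_le hβ
  obtain ⟨C₂, hC₂, H₂⟩ := exists_rpow_mul_exp_le (β := β) (by linarith)
  have hK := weight_integral_nonneg β
  set K := ∫ v : E3, (1 + ‖v‖) ^ (2 - β) with hKdef
  set c := min (1 - ν) (1 + 2 * ν) with hc
  have hc0 : 0 < c := lt_min (by linarith) (by linarith)
  have hν : 0 < 1 - ν := by linarith
  set D := C₁ + C₂ * (2 ^ (β - 2) * K) with hD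
  have hD0 : 0 ≤ D := by positivity
  refine ⟨K / (3 * (1 - ν)) * (2 ^ β * (D / √(c ^ 3))) + 1, by positivity, ?_⟩
  intro g N hg h0 h2 hρ hT hN v
  have hN0 : 0 ≤ N := (mul_nonneg (by positivity) (hg 0)).trans (hN 0)
  obtain ⟨σ, hσ, hTσ⟩ : ∃ σ : ℝ, 0 < σ ∧ temp g = σ ^ 2 :=
    ⟨√(temp g), Real.sqrt_pos.2 hT, (Real.sq_sqrt hT.le).symm⟩
  have hA : collFreq g ν ≤ K / (3 * (1 - ν)) * N := by
    have := dens_mul_temp_le hβ hg h0 h2 hρ hN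
    rw [collFreq, div_le_iff₀ hν]
    have e : K / (3 * (1 - ν)) * N * (1 - ν) = N * K / 3 := by field_simp
    rw [e]; linarith
  have hA0 : 0 ≤ collFreq g ν := by unfold collFreq; positivity
  set E := Real.exp (-(‖v - bulk g‖ ^ 2 / (6 * temp g))) with hE
  have hE0 : 0 < E := Real.exp_pos _
  have hcore : (1 + ‖v‖) ^ β * (dens g * E) ≤ 2 ^ β * (D * N * σ ^ 3) := by
    have hv : ‖v‖ ≤ ‖bulk g‖ + ‖v - bulk g‖ := by
      simpa using norm_add_le (bulk g) (v - bulk g)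
    rcases le_total ‖v - bulk g‖ (1 + ‖bulk g‖) with h | h
    · have hE1 : E ≤ 1 := Real.exp_le_one_iff.2 (by
        have : 0 ≤ ‖v - bulk g‖ ^ 2 / (6 * temp g) := by positivity
        linarith)
      calc (1 + ‖v‖) ^ β * (dens g * E)
          ≤ (2 * (1 + ‖bulk g‖)) ^ β * (dens g * 1) := by
            gcongr
            linarith
        _ = 2 ^ β * (dens g * (1 + ‖bulk g‖) ^ β) := by
            rw [Real.mul_rpow (by norm_num) (by positivity)]; ring
        _ ≤ 2 ^ β * (C₁ * N * σ ^ 3) := by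
            gcongr ?_ * ?_
            exact H₁ g N hg h0 h2 hρ hN σ hσ hTσ
        _ ≤ _ := by
            gcongr
            rw [hD]
            have : 0 ≤ C₂ * (2 ^ (β - 2) * K) := by positivity
            linarith
    · set y := ‖v - bulk g‖ / σ with hy
      have hyE : E = Real.exp (-(y ^ 2 / 6)) := by
        rw [hE, hy, hTσ]; congr 2; field_simp
      have hyσ : ‖v - bulk g‖ = y * σ := by rw [hy]; field_simp
      have hd := dens_mul_rpow_temp_le hβ hg h0 h2 hρ hN hσ hTσ
      have e : σ ^ β = σ ^ (β - 3) * σ ^ 3 := by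
        rw [← Real.rpow_natCast σ 3, ← Real.rpow_add hσ]; norm_num
      calc (1 + ‖v‖) ^ β * (dens g * E)
          ≤ (2 * ‖v - bulk g‖) ^ β * (dens g * E) := by
            gcongr
            linarith
        _ = 2 ^ β * ((y ^ β * Real.exp (-(y ^ 2 / 6))) * (dens g * σ ^ (β - 3)) * σ ^ 3) := by
            rw [Real.mul_rpow (by norm_num) (by positivity), hyE, hyσ,
              Real.mul_rpow (by positivity) hσ.le, e]
            ring
        _ ≤ 2 ^ β * (C₂ * (2 ^ (β - 2) * K * N) * σ ^ 3) := by
            gcongr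
            exact H₂ y (by positivity)
        _ = 2 ^ β * (C₂ * (2 ^ (β - 2) * K) * N * σ ^ 3) := by ring
        _ ≤ _ := by
            gcongr
            rw [hD]
            linarith
  have hroot : √((c * temp g) ^ 3) = √(c ^ 3) * σ ^ 3 := by
    rw [hTσ, mul_pow, Real.sqrt_mul (by positivity), ← pow_mul, mul_comm 2 3, pow_mul,
      Real.sqrt_sq (by positivity)]
  have hc3 : 0 < √(c ^ 3) := Real.sqrt_pos.2 (by positivity)
  have hM : (1 + ‖v‖) ^ β * aGauss g ν v ≤ 2 ^ β * (D / √(c ^ 3)) * N := by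
    have hG := aGauss_le hν1 hν2 hg h0 h2 hρ hT v
    rw [← hc, hroot, ← hE] at hG
    calc (1 + ‖v‖) ^ β * aGauss g ν v
        ≤ (1 + ‖v‖) ^ β * (dens g / (√(c ^ 3) * σ ^ 3) * E) := by gcongr
      _ = (1 + ‖v‖) ^ β * (dens g * E) / (√(c ^ 3) * σ ^ 3) := by ring
      _ ≤ 2 ^ β * (D * N * σ ^ 3) / (√(c ^ 3) * σ ^ 3) := by gcongr
      _ = _ := by field_simp
  calc (1 + ‖v‖) ^ β * (collFreq g ν * aGauss g ν v)
      = collFreq g ν * ((1 + ‖v‖) ^ β * aGauss g ν v) := by ring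
    _ ≤ K / (3 * (1 - ν)) * N * (2 ^ β * (D / √(c ^ 3)) * N) := by
        have : 0 ≤ (1 + ‖v‖) ^ β * aGauss g ν v := by unfold aGauss; positivity
        gcongr
    _ ≤ _ := by nlinarith [sq_nonneg N]

lemma IsMildSolution.initial {ν β : ℝ} {F₀ : E3 → E3 → ℝ} {F : ℝ → E3 → E3 → ℝ}
    (h : IsMildSolution ν β F₀ F) : F 0 = F₀ := by
  ext x v
  simpa using h.mild 0 le_rfl x v

lemma weight_mul_le_wSup {β : ℝ} {f : E3 → E3 → ℝ} (hf : WBdd β f) (x v : E3) :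
    (1 + ‖v‖) ^ β * f x v ≤ wSup β f :=
  le_ciSup hf (x, v)

/-- One step of the bootstrap: an a priori bound on `[0, t]` improves the bound at `t`. -/
lemma wSup_le_of_forall_le {ν β C B : ℝ} {F₀ : E3 → E3 → ℝ} {F : ℝ → E3 → E3 → ℝ}
    (hν2 : ν < 1) (hF₀ : ∀ x v, 0 ≤ F₀ x v) (hb : WBdd β F₀) (h : IsMildSolution ν β F₀ F)
    (hC : ∀ (g : E3 → ℝ) (N : ℝ), (∀ v, 0 ≤ g v) → Integrable g →
      Integrable (fun v => ‖v‖ ^ 2 * g v) → 0 < dens g → 0 < temp g →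
      (∀ v, (1 + ‖v‖) ^ β * g v ≤ N) → ∀ v,
      (1 + ‖v‖) ^ β * (collFreq g ν * aGauss g ν v) ≤ C * N ^ 2)
    {t : ℝ} (ht : 0 ≤ t) (hB : ∀ s ∈ Set.Icc 0 t, wSup β (F s) ≤ B) :
    wSup β (F t) ≤ wSup β F₀ + C * B ^ 2 * t := by
  have hν : 0 < 1 - ν := by linarith
  have hcoll : ∀ s, 0 ≤ s → ∀ x, 0 ≤ collFreq (F s x) ν := fun s hs x =>
    div_nonneg (mul_nonneg (h.dens_pos s hs x).le (h.temp_pos s hs x).le) hν.le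
  refine ciSup_le fun ⟨x, v⟩ => ?_
  simp only
  have hw : 0 < (1 + ‖v‖) ^ β := by positivity
  have hexp : ∀ s ∈ Set.Icc 0 t,
      Real.exp (-(∫ τ in s..t, collFreq (F τ (x - (t - τ) • v)) ν)) ≤ 1 := by
    intro s hs
    rw [Real.exp_le_one_iff, neg_nonpos]
    exact intervalIntegral.integral_nonneg hs.2 fun τ hτ => hcoll τ (hs.1.trans hτ.1) _
  have hgain : (∫ s in (0 : ℝ)..t,
      Real.exp (-(∫ τ in s..t, collFreq (F τ (x - (t - τ) • v)) ν)) *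
        collFreq (F s (x - (t - s) • v)) ν * aGauss (F s (x - (t - s) • v)) ν v) ≤
      C * B ^ 2 / (1 + ‖v‖) ^ β * |t - 0| := by
    refine (Real.le_norm_self _).trans (intervalIntegral.norm_integral_le_of_norm_le_const ?_)
    intro s hs
    rw [Set.uIoc_of_le ht] at hs
    have hs' : s ∈ Set.Icc 0 t := ⟨hs.1.le, hs.2⟩
    have hM : 0 ≤ aGauss (F s (x - (t - s) • v)) ν v := by
      have := h.dens_pos s hs'.1 (x - (t - s) • v)
      unfold aGauss; positivity
    have hA := hcoll s hs'.1 (x - (t - s) • v)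
    have hgs := hC (F s (x - (t - s) • v)) B (h.nonneg s hs'.1 _) (h.integrable s hs'.1 _)
      (h.moment2 s hs'.1 _) (h.dens_pos s hs'.1 _) (h.temp_pos s hs'.1 _)
      (fun v' => (weight_mul_le_wSup (h.wnorm_bdd s hs'.1) _ v').trans (hB s hs')) v
    rw [Real.norm_of_nonneg (by positivity), le_div_iff₀ hw]
    refine le_trans ?_ hgs
    rw [mul_comm, mul_assoc]
    exact mul_le_mul_of_nonneg_left
      (mul_le_of_le_one_left (mul_nonneg hA hM) (hexp s hs')) hw.le
  rw [sub_zero, abs_of_nonneg ht] at hgain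
  rw [h.mild t ht x v, mul_add]
  have hdatum : (1 + ‖v‖) ^ β * (F₀ (x - t • v) v *
      Real.exp (-(∫ τ in (0 : ℝ)..t, collFreq (F τ (x - (t - τ) • v)) ν))) ≤ wSup β F₀ := by
    refine le_trans ?_ (weight_mul_le_wSup hb (x - t • v) v)
    gcongr
    exact mul_le_of_le_one_right (hF₀ _ _) (hexp 0 ⟨le_rfl, ht⟩)
  refine add_le_add hdatum ?_
  calc _ ≤ (1 + ‖v‖) ^ β * (C * B ^ 2 / (1 + ‖v‖) ^ β * t) := by gcongr
    _ = _ := by field_simp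

/-- Continuity argument: a function which cannot first reach the level `B` stays below it. -/
lemma le_of_no_first_hit {f : ℝ → ℝ} {B b : ℝ} (hf : ContinuousOn f (Set.Icc 0 b))
    (hstep : ∀ t ∈ Set.Icc 0 b, (∀ s ∈ Set.Icc 0 t, f s ≤ B) → f t < B) (h0 : f 0 < B) :
    ∀ t ∈ Set.Icc 0 b, f t ≤ B := by
  by_contra! hcon
  obtain ⟨t, ht, hlt⟩ := hcon
  set S := Set.Icc 0 b ∩ f ⁻¹' Set.Ici B with hS
  have hclosed : IsClosed S := hf.preimage_isClosed_of_isClosed isClosed_Icc isClosed_Ici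
  have hcomp : IsCompact S := isCompact_Icc.of_isClosed_subset hclosed Set.inter_subset_left
  obtain ⟨m, hm, hmin⟩ := hcomp.exists_isLeast ⟨t, ht, hlt.le⟩
  have hbelow : ∀ s ∈ Set.Ico 0 m, f s < B := fun s hs => by
    by_contra! hBs
    exact absurd (hmin ⟨⟨hs.1, hs.2.le.trans hm.1.2⟩, hBs⟩) (not_le.2 hs.2)
  have hm0 : 0 < m := hm.1.1.lt_of_ne fun h => absurd hm.2 (by rw [← h]; exact not_le.2 h0)
  have hfm : f m ≤ B := by
    have hsub : Set.Icc 0 m ⊆ Set.Icc 0 b := Set.Icc_subset_Icc_right hm.1.2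
    have hcl : m ∈ closure (Set.Ico 0 m) := by
      rw [closure_Ico hm0.ne]; exact ⟨hm0.le, le_rfl⟩
    refine ((hf m hm.1).mono (Set.Ico_subset_Icc_self.trans hsub)).closure_le hcl
      continuousWithinAt_const fun s hs => (hbelow s hs).le
  refine absurd hm.2 (not_le.2 (hstep m hm.1 fun s hs => ?_))
  rcases hs.2.lt_or_eq with h | h
  · exact (hbelow s ⟨hs.1, h⟩).le
  · rw [h]; exact hfm

end ESBGK

/-- Lemma 3.1: local-in-time weighted `L^∞` estimate. -/
theorem local_Linfty_estimate
    (ν β : ℝ) (hν1 : -(1 / 2 : ℝ) < ν) (hν2 : ν < 1) (hβ : 5 < β) :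
    ∃ Cβν > (0 : ℝ), ∀ (F₀ : E3 → E3 → ℝ) (F : ℝ → E3 → E3 → ℝ),
      Measurable (fun p : E3 × E3 => F₀ p.1 p.2) →
      (∀ x v, 0 ≤ F₀ x v) →
      WBdd β F₀ →
      IsMildSolution ν β F₀ F →
      ∀ t ∈ Set.Icc (0 : ℝ) (4 * Cβν * wSup β F₀)⁻¹, wSup β (F t) ≤ 2 * wSup β F₀ := by
  obtain ⟨C, hC0, hC⟩ := ESBGK.exists_gain_le hν1 hν2 hβ
  refine ⟨2 * C, by positivity, fun F₀ F _ hF₀ hb h => ?_⟩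
  have hdatum := ESBGK.IsMildSolution.initial h
  set M := wSup β F₀ with hM
  have hM0 : 0 ≤ M :=
    (mul_nonneg (by positivity) (hF₀ 0 0)).trans (ESBGK.weight_mul_le_wSup hb 0 0)
  rcases hM0.eq_or_lt with hz | hpos
  · intro t ht
    rw [← hz, mul_zero, _root_.inv_zero, Set.Icc_self, Set.mem_singleton_iff] at ht
    rw [ht, hdatum]
    linarith
  refine ESBGK.le_of_no_first_hit (h.wnorm_cont.mono fun s hs => hs.1) ?_ (by
    simp only [hdatum]; linarith)
  intro t ht hB
  refine (ESBGK.wSup_le_of_forall_le hν2 hF₀ hb h hC ht.1 hB).trans_lt ?_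
  have h1 : C * (2 * M) ^ 2 * t ≤ C * (2 * M) ^ 2 * (4 * (2 * C) * M)⁻¹ := by
    gcongr
    exact ht.2
  have h2 : C * (2 * M) ^ 2 * (4 * (2 * C) * M)⁻¹ = M / 2 := by
    field_simp; norm_num
  rw [← hM]
  linarith
end

section
/- Let ν ∈ (−1/2,1) and β > 5. There exists a constant C_β(ν) > 0, depending only on β and ν, such that for every nonnegative measurable g : ℝ³ → ℝ with 0 < ρ < ∞, 0 < T < ∞ and finite second moment (so that M_ν is defined), one has sup_{v∈ℝ³}(1+|v|)^β M_ν(v) ≤ C_β(ν)·sup_{v∈ℝ³}(1+|v|)^β g(v). -/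
open MeasureTheory Real Matrix ENNReal

/-- A real symmetric matrix whose quadratic form dominates `a |x|²` has determinant at
least `a ^ n`. -/
lemma pow_card_le_det_of_le_dotProduct_mulVec {n : Type*} [Fintype n] [DecidableEq n]
    {A : Matrix n n ℝ} (hA : A.IsHermitian) {a : ℝ} (ha : 0 ≤ a)
    (h : ∀ x : n → ℝ, a * (x ⬝ᵥ x) ≤ x ⬝ᵥ (A *ᵥ x)) :
    a ^ Fintype.card n ≤ A.det := by
  have key : ∀ i, a ≤ hA.eigenvalues i := by
    intro i
    have h1 := h (hA.eigenvectorBasis i).ofLp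
    have h2 : (hA.eigenvectorBasis i).ofLp ⬝ᵥ (hA.eigenvectorBasis i).ofLp = 1 := by
      have h3 := hA.eigenvectorBasis.orthonormal.1 i
      have h4 := EuclideanSpace.real_norm_sq_eq (hA.eigenvectorBasis i)
      rw [h3] at h4
      simp only [dotProduct, ← sq]
      linarith
    rw [h2, mul_one] at h1
    rw [hA.eigenvalues_eq i]
    simpa using h1
  rw [hA.det_eq_prod_eigenvalues]
  calc a ^ Fintype.card n = ∏ _i : n, a := by simp
    _ ≤ _ := Finset.prod_le_prod (fun _ _ => ha) fun i _ => by simpa using key i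

/-- A nonsingular positive semidefinite form bounded by `b |x|²` has inverse form bounded below by
`|x|² / b`. -/
lemma dotProduct_div_le_dotProduct_inv_mulVec {n : Type*} [Fintype n] [DecidableEq n]
    {A : Matrix n n ℝ} (hA : A.IsHermitian) (hdet : IsUnit A.det) {b : ℝ} (hb : 0 < b)
    (h0 : ∀ x : n → ℝ, 0 ≤ x ⬝ᵥ (A *ᵥ x))
    (h : ∀ x : n → ℝ, x ⬝ᵥ (A *ᵥ x) ≤ b * (x ⬝ᵥ x)) (x : n → ℝ) :
    x ⬝ᵥ x / b ≤ x ⬝ᵥ (A⁻¹ *ᵥ x) := by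
  set y := A⁻¹ *ᵥ x with hy
  have hx : A *ᵥ y = x := by
    rw [hy, Matrix.mulVec_mulVec, Matrix.mul_nonsing_inv _ hdet, Matrix.one_mulVec]
  have hsymm : y ⬝ᵥ (A *ᵥ x) = x ⬝ᵥ x := by
    have hT : Aᵀ = A := by simpa using hA.eq
    rw [Matrix.dotProduct_mulVec, ← Matrix.mulVec_transpose, hT, hx]
  have h1 := h0 (y - b⁻¹ • x)
  rw [Matrix.mulVec_sub, Matrix.mulVec_smul, hx, sub_dotProduct, dotProduct_sub, dotProduct_sub,
    dotProduct_smul, smul_dotProduct, smul_dotProduct, dotProduct_smul, hsymm,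
    dotProduct_comm y x] at h1
  simp only [smul_eq_mul] at h1
  have h2 : b⁻¹ * (b⁻¹ * (x ⬝ᵥ (A *ᵥ x))) ≤ b⁻¹ * (x ⬝ᵥ x) := by
    have : b⁻¹ * (x ⬝ᵥ (A *ᵥ x)) ≤ x ⬝ᵥ x := by
      rw [inv_mul_le_iff₀ hb]
      exact h x
    gcongr
  rw [div_eq_inv_mul]
  linarith

lemma one_add_rpow_mul_exp_neg_sq_le {β s : ℝ} (hβ : 0 ≤ β) (hs : 0 ≤ s) :
    (1 + s) ^ β * Real.exp (-s ^ 2) ≤ Real.exp (β ^ 2 / 4) := by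
  have h1 : (1 + s) ^ β ≤ Real.exp (β * s) := by
    rw [mul_comm, Real.exp_mul]
    exact Real.rpow_le_rpow (by positivity) (by linarith [Real.add_one_le_exp s]) hβ
  calc (1 + s) ^ β * Real.exp (-s ^ 2) ≤ Real.exp (β * s) * Real.exp (-s ^ 2) := by gcongr
    _ = Real.exp (β * s + -s ^ 2) := (Real.exp_add _ _).symm
    _ ≤ _ := Real.exp_le_exp.2 (by nlinarith [sq_nonneg (β / 2 - s)])

section Moments

variable {g : E3 → ℝ}

lemma integrable_sq_norm_sub_bulk_mul (hT : 0 < temp g) :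
    Integrable fun v => ‖v - bulk g‖ ^ 2 * g v := by
  by_contra h
  simp [temp, integral_undef h] at hT

lemma integral_sq_norm_sub_bulk_mul (hρ : 0 < dens g) :
    ∫ v, ‖v - bulk g‖ ^ 2 * g v = 3 * dens g * temp g := by
  rw [temp]
  field_simp

lemma integrable_smul_self (hgm : Measurable g) (hg0 : ∀ v, 0 ≤ g v) (hg : Integrable g)
    (hg2 : Integrable fun v => ‖v‖ ^ 2 * g v) : Integrable fun v => g v • v := by
  refine (hg.add hg2).mono' (hgm.smul measurable_id).aestronglyMeasurable (.of_forall fun v => ?_)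
  rw [norm_smul, Real.norm_of_nonneg (hg0 v)]
  simp only [Pi.add_apply]
  nlinarith [mul_nonneg (hg0 v) (sq_nonneg (‖v‖ - 1)), mul_nonneg (hg0 v) (sq_nonneg ‖v‖), hg0 v]

/-- Second moment about the origin: `∫ |v|² g = 3 ρ T + ρ |u|²`. -/
lemma integral_sq_norm_mul (hgm : Measurable g) (hg0 : ∀ v, 0 ≤ g v) (hg : Integrable g)
    (hg2 : Integrable fun v => ‖v‖ ^ 2 * g v) (hρ : 0 < dens g) (hT : 0 < temp g) :
    ∫ v, ‖v‖ ^ 2 * g v = 3 * dens g * temp g + dens g * ‖bulk g‖ ^ 2 := by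
  have hI := integrable_smul_self hgm hg0 hg hg2
  have hu : ∫ v, g v • v = dens g • bulk g := by
    rw [bulk, smul_smul, mul_inv_cancel₀ hρ.ne', one_smul]
  have hin : ∫ v, inner ℝ (bulk g) (g v • v) = dens g * ‖bulk g‖ ^ 2 := by
    rw [integral_inner hI, hu, inner_smul_right, real_inner_self_eq_norm_sq]
  have hpt : ∀ v, ‖v‖ ^ 2 * g v =
      ‖v - bulk g‖ ^ 2 * g v + 2 * inner ℝ (bulk g) (g v • v) - ‖bulk g‖ ^ 2 * g v := by
    intro v
    rw [norm_sub_sq_real, inner_smul_right, real_inner_comm]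
    ring
  have hc := integrable_sq_norm_sub_bulk_mul hT
  have hi : Integrable fun v => inner ℝ (bulk g) (g v • v) := hI.const_inner _
  simp_rw [hpt]
  have hci : Integrable fun v => ‖v - bulk g‖ ^ 2 * g v + 2 * inner ℝ (bulk g) (g v • v) :=
    hc.add (hi.const_mul 2)
  rw [integral_sub hci (hg.const_mul _), integral_add hc (hi.const_mul 2), integral_const_mul, integral_const_mul, hin, integral_sq_norm_sub_bulk_mul hρ]
  change _ - _ * dens g = _
  ring

lemma integrable_stress_entry (hgm : Measurable g) (hg0 : ∀ v, 0 ≤ g v) (hT : 0 < temp g)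
    (i j : Fin 3) : Integrable fun v => (v - bulk g) i * (v - bulk g) j * g v := by
  refine (integrable_sq_norm_sub_bulk_mul hT).mono' (by fun_prop) (.of_forall fun v => ?_)
  rw [norm_mul, norm_mul, Real.norm_of_nonneg (hg0 v), sq]
  gcongr
  · exact hg0 v
  · exact PiLp.norm_apply_le _ i
  · exact PiLp.norm_apply_le _ j

lemma dotProduct_stress_mulVec (hgm : Measurable g) (hg0 : ∀ v, 0 ≤ g v) (hT : 0 < temp g)
    (x : Fin 3 → ℝ) :
    x ⬝ᵥ (stress g *ᵥ x) =
      (dens g)⁻¹ * ∫ v, inner ℝ (WithLp.toLp 2 x) (v - bulk g) ^ 2 * g v := by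
  have hpt : ∀ v, inner ℝ (WithLp.toLp 2 x) (v - bulk g) ^ 2 * g v =
      ∑ i, ∑ j, x i * x j * ((v - bulk g) i * (v - bulk g) j * g v) := by
    intro v
    simp only [PiLp.inner_apply, Fin.sum_univ_three]
    simp
    ring
  simp_rw [hpt]
  have hI := fun i j => (integrable_stress_entry hgm hg0 hT i j).const_mul (x i * x j)
  rw [integral_finsetSum _ fun i _ => integrable_finsetSum _ fun j _ => hI i j]
  simp_rw [integral_finsetSum _ fun j _ => hI _ j, integral_const_mul]
  simp only [dotProduct, Matrix.mulVec, stress, Matrix.of_apply, Finset.mul_sum]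
  refine Finset.sum_congr rfl fun i _ => Finset.sum_congr rfl fun j _ => ?_
  ring

lemma dotProduct_stress_mulVec_nonneg (hgm : Measurable g) (hg0 : ∀ v, 0 ≤ g v)
    (hρ : 0 < dens g) (hT : 0 < temp g) (x : Fin 3 → ℝ) : 0 ≤ x ⬝ᵥ (stress g *ᵥ x) := by
  rw [dotProduct_stress_mulVec hgm hg0 hT]
  exact mul_nonneg (inv_nonneg.2 hρ.le)
    (integral_nonneg fun v => mul_nonneg (sq_nonneg _) (hg0 v))

lemma dotProduct_stress_mulVec_le (hgm : Measurable g) (hg0 : ∀ v, 0 ≤ g v)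
    (hρ : 0 < dens g) (hT : 0 < temp g) (x : Fin 3 → ℝ) :
    x ⬝ᵥ (stress g *ᵥ x) ≤ 3 * temp g * (x ⬝ᵥ x) := by
  have hx : x ⬝ᵥ x = ‖WithLp.toLp 2 x‖ ^ 2 := by
    rw [EuclideanSpace.real_norm_sq_eq]
    simp only [dotProduct, sq]
  have hle : ∫ v, inner ℝ (WithLp.toLp 2 x) (v - bulk g) ^ 2 * g v ≤
      ∫ v, ‖WithLp.toLp 2 x‖ ^ 2 * (‖v - bulk g‖ ^ 2 * g v) := by
    refine integral_mono_of_nonneg (.of_forall fun v => mul_nonneg (sq_nonneg _) (hg0 v))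
      ((integrable_sq_norm_sub_bulk_mul hT).const_mul _) (.of_forall fun v => ?_)
    have h1 := abs_real_inner_le_norm (WithLp.toLp 2 x) (v - bulk g)
    have h2 := pow_le_pow_left₀ (abs_nonneg _) h1 2
    rw [sq_abs, mul_pow] at h2
    simpa only [mul_assoc] using mul_le_mul_of_nonneg_right h2 (hg0 v)
  rw [integral_const_mul, integral_sq_norm_sub_bulk_mul hρ, ← hx] at hle
  rw [dotProduct_stress_mulVec hgm hg0 hT, inv_mul_le_iff₀ hρ]
  linarith

lemma dotProduct_tempTensor_mulVec (g : E3 → ℝ) (ν : ℝ) (x : Fin 3 → ℝ) :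
    x ⬝ᵥ (tempTensor g ν *ᵥ x) =
      (1 - ν) * temp g * (x ⬝ᵥ x) + ν * (x ⬝ᵥ (stress g *ᵥ x)) := by
  simp [tempTensor, Matrix.add_mulVec, Matrix.smul_mulVec, dotProduct_add, dotProduct_smul]

lemma tempTensor_isHermitian (g : E3 → ℝ) (ν : ℝ) : (tempTensor g ν).IsHermitian := by
  refine Matrix.IsHermitian.ext fun i j => ?_
  simp only [tempTensor, stress, Matrix.add_apply, Matrix.smul_apply, Matrix.of_apply, star_trivial,
    mul_comm, Matrix.one_apply, eq_comm]

/-- The lower bound `min (1-ν) (1+2ν) T ≤ 𝒯_ν` as quadratic forms. -/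
lemma le_dotProduct_tempTensor_mulVec {ν : ℝ} (hgm : Measurable g) (hg0 : ∀ v, 0 ≤ g v)
    (hρ : 0 < dens g) (hT : 0 < temp g) (x : Fin 3 → ℝ) :
    min (1 - ν) (1 + 2 * ν) * temp g * (x ⬝ᵥ x) ≤ x ⬝ᵥ (tempTensor g ν *ᵥ x) := by
  have h0 := dotProduct_stress_mulVec_nonneg hgm hg0 hρ hT x
  have h1 := dotProduct_stress_mulVec_le hgm hg0 hρ hT x
  have hx : 0 ≤ temp g * (x ⬝ᵥ x) :=
    mul_nonneg hT.le (Finset.sum_nonneg fun i _ => mul_self_nonneg (x i))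
  rw [dotProduct_tempTensor_mulVec]
  rcases le_total 0 ν with hν | hν
  · nlinarith [mul_le_mul_of_nonneg_right (min_le_left (1 - ν) (1 + 2 * ν)) hx, mul_nonneg hν h0]
  · nlinarith [mul_le_mul_of_nonneg_right (min_le_right (1 - ν) (1 + 2 * ν)) hx,
      mul_le_mul_of_nonpos_left h1 hν]

lemma dotProduct_tempTensor_mulVec_le {ν : ℝ} (hν1 : -(1 / 2 : ℝ) < ν) (hν2 : ν < 1)
    (hgm : Measurable g) (hg0 : ∀ v, 0 ≤ g v)
    (hρ : 0 < dens g) (hT : 0 < temp g) (x : Fin 3 → ℝ) :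
    x ⬝ᵥ (tempTensor g ν *ᵥ x) ≤ 3 * temp g * (x ⬝ᵥ x) := by
  have h0 := dotProduct_stress_mulVec_nonneg hgm hg0 hρ hT x
  have h1 := dotProduct_stress_mulVec_le hgm hg0 hρ hT x
  have hx : 0 ≤ temp g * (x ⬝ᵥ x) :=
    mul_nonneg hT.le (Finset.sum_nonneg fun i _ => mul_self_nonneg (x i))
  rw [dotProduct_tempTensor_mulVec]
  rcases le_total 0 ν with hν | hν
  · nlinarith [mul_le_mul_of_nonneg_left h1 hν]
  · nlinarith [mul_nonneg (neg_nonneg.2 hν) h0]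

/-- The anisotropic Gaussian is dominated by an isotropic one, written at the length scale
`R = √(6T)`. -/
lemma aGauss_le {ν R : ℝ} (hν1 : -(1 / 2 : ℝ) < ν) (hν2 : ν < 1)
    (hgm : Measurable g) (hg0 : ∀ v, 0 ≤ g v) (hρ : 0 < dens g) (hT : 0 < temp g)
    (hR : 0 < R) (hRT : R ^ 2 = 6 * temp g) (v : E3) :
    aGauss g ν v ≤ dens g / (√((π / 3 * min (1 - ν) (1 + 2 * ν)) ^ 3) * R ^ 3) *
      Real.exp (-(‖v - bulk g‖ / R) ^ 2) := by
  set m := min (1 - ν) (1 + 2 * ν) with hm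
  have hm0 : 0 < m := lt_min (by linarith) (by linarith)
  have hdet := pow_card_le_det_of_le_dotProduct_mulVec (tempTensor_isHermitian g ν)
    (mul_nonneg hm0.le hT.le) (le_dotProduct_tempTensor_mulVec hgm hg0 hρ hT)
  rw [Fintype.card_fin] at hdet
  have hdet0 : 0 < (tempTensor g ν).det := lt_of_lt_of_le (by positivity) hdet
  have hinv := dotProduct_div_le_dotProduct_inv_mulVec (tempTensor_isHermitian g ν)
    hdet0.ne'.isUnit (by positivity : 0 < 3 * temp g)
    (fun x => le_trans (mul_nonneg (by positivity)
      (Finset.sum_nonneg fun i _ => mul_self_nonneg (x i)))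
      (le_dotProduct_tempTensor_mulVec (ν := ν) hgm hg0 hρ hT x))
    (dotProduct_tempTensor_mulVec_le hν1 hν2 hgm hg0 hρ hT) (fun i => (v - bulk g) i)
  have hnorm : (fun i => (v - bulk g) i) ⬝ᵥ (fun i => (v - bulk g) i) = ‖v - bulk g‖ ^ 2 := by
    rw [EuclideanSpace.real_norm_sq_eq]
    simp only [dotProduct, sq]
  rw [hnorm] at hinv
  have hsqrt : √((π / 3 * m) ^ 3) * R ^ 3 ≤ √(((2 * π) • tempTensor g ν).det) := by
    have hR3 : R ^ 3 = √((R ^ 2) ^ 3) := by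
      rw [← pow_mul, mul_comm 2 3, pow_mul, Real.sqrt_sq (by positivity)]
    rw [hR3, ← Real.sqrt_mul (by positivity), Matrix.det_smul, Fintype.card_fin, hRT]
    refine Real.sqrt_le_sqrt ?_
    calc (π / 3 * m) ^ 3 * (6 * temp g) ^ 3 = (2 * π) ^ 3 * (m * temp g) ^ 3 := by ring
      _ ≤ _ := by gcongr
  unfold aGauss
  gcongr
  rw [div_pow, hRT]
  have : ‖v - bulk g‖ ^ 2 / (6 * temp g) = 1 / 2 * (‖v - bulk g‖ ^ 2 / (3 * temp g)) := by
    ring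
  rw [this]
  linarith

/-- If the bulk speed dominates the thermal length `R = √(6T)`, the density is controlled by the
values of `g` on the ball of radius `R` around the bulk velocity. -/
lemma dens_le_of_le_bulk {β N R : ℝ} (hβ : 0 ≤ β) (hN : 0 ≤ N) (hg : Integrable g)
    (hg0 : ∀ v, 0 ≤ g v) (hρ : 0 < dens g) (hT : 0 < temp g)
    (hgN : ∀ v, g v ≤ N * (1 + ‖v‖) ^ (-β)) (hR : 0 < R) (hRT : R ^ 2 = 6 * temp g)
    (hu : 2 * R ≤ 1 + ‖bulk g‖) :
    dens g ≤ 2 * N * 2 ^ β * (1 + ‖bulk g‖) ^ (-β) * volume.real (Metric.ball (0 : E3) 1) *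
      R ^ 3 := by
  set c := N * ((1 + ‖bulk g‖) / 2) ^ (-β) with hc
  have hball : volume (Metric.ball (bulk g) R) < ⊤ := measure_ball_lt_top
  have hI1 := (integrable_sq_norm_sub_bulk_mul hT).const_mul (R ^ 2)⁻¹
  have hI2 : Integrable ((Metric.ball (bulk g) R).indicator fun _ => c) :=
    (integrable_indicator_iff measurableSet_ball).2 (integrableOn_const hball.ne)
  have hpt : ∀ v, g v ≤ (R ^ 2)⁻¹ * (‖v - bulk g‖ ^ 2 * g v) +
      (Metric.ball (bulk g) R).indicator (fun _ => c) v := by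
    intro v
    by_cases hv : v ∈ Metric.ball (bulk g) R
    · rw [Set.indicator_of_mem hv]
      have h1 : (1 + ‖bulk g‖) / 2 ≤ 1 + ‖v‖ := by
        rw [mem_ball_iff_norm] at hv
        have := norm_sub_norm_le (bulk g) v
        rw [norm_sub_rev] at this
        linarith
      have h2 : g v ≤ c := (hgN v).trans (by
        rw [hc]
        exact mul_le_mul_of_nonneg_left
          (Real.rpow_le_rpow_of_nonpos (by positivity) h1 (by linarith)) hN)
      have h3 : 0 ≤ (R ^ 2)⁻¹ * (‖v - bulk g‖ ^ 2 * g v) :=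
        mul_nonneg (by positivity) (mul_nonneg (by positivity) (hg0 v))
      linarith
    · rw [Set.indicator_of_notMem hv, add_zero, ← div_eq_inv_mul, le_div_iff₀ (by positivity),
        mul_comm]
      rw [mem_ball_iff_norm, not_lt] at hv
      have := hg0 v
      gcongr
  have hint := integral_mono hg (hI1.add hI2) hpt
  simp only [Pi.add_apply] at hint
  rw [integral_add hI1 hI2, integral_const_mul, integral_sq_norm_sub_bulk_mul hρ,
    integral_indicator_const _ measurableSet_ball, smul_eq_mul, hRT] at hint
  have hvol : volume.real (Metric.ball (bulk g) R) =
      R ^ 3 * volume.real (Metric.ball (0 : E3) 1) := by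
    simp [measureReal_def, Measure.addHaar_ball volume (bulk g) hR.le, hR.le]
  have hhalf : (6 * temp g)⁻¹ * (3 * dens g * temp g) = dens g / 2 := by
    field_simp
    norm_num
  have hcc : c = N * 2 ^ β * (1 + ‖bulk g‖) ^ (-β) := by
    rw [hc, Real.div_rpow (by positivity) (by norm_num), Real.rpow_neg (by norm_num : (0:ℝ) ≤ 2)]
    field_simp
  change dens g ≤ _ at hint
  rw [hvol, hhalf, hcc] at hint
  linarith

/-- If the thermal length `R = √(6T)` dominates the bulk speed, the density is controlled by the
tail of `∫ |v|² g`. -/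
lemma dens_le_of_sq_norm {β N R : ℝ} (hβ : 5 < β) (hN : 0 ≤ N) (hgm : Measurable g)
    (hg : Integrable g) (hg0 : ∀ v, 0 ≤ g v) (hg2 : Integrable fun v => ‖v‖ ^ 2 * g v)
    (hρ : 0 < dens g) (hT : 0 < temp g)
    (hgN : ∀ v, g v ≤ N * (1 + ‖v‖) ^ (-β)) (hR : 0 < R) (hRT : R ^ 2 = 6 * temp g) :
    dens g ≤ N * (2 ^ (2 * β - 5) * ∫ w : E3, (1 + ‖w‖) ^ (-(β - 2))) * R ^ (3 - β) := by
  set r := R / 2 with hr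
  have hr0 : 0 < r := by positivity
  set J := ∫ w : E3, (1 + ‖w‖) ^ (-(β - 2)) with hJ
  have hJI : Integrable fun w : E3 => (1 + ‖w‖) ^ (-(β - 2)) :=
    integrable_one_add_norm (by simp; linarith)
  have hI2 := (hJI.comp_smul (inv_ne_zero hr0.ne')).const_mul (N * (r / 2) ^ (2 - β))
  have hpt : ∀ v, ‖v‖ ^ 2 * g v ≤ r ^ 2 * g v +
      N * (r / 2) ^ (2 - β) * (1 + ‖r⁻¹ • v‖) ^ (-(β - 2)) := by
    intro v
    have h0 : 0 ≤ N * (r / 2) ^ (2 - β) * (1 + ‖r⁻¹ • v‖) ^ (-(β - 2)) := by positivity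
    rcases le_or_gt ‖v‖ r with hv | hv
    · have : ‖v‖ ^ 2 * g v ≤ r ^ 2 * g v := by
        have := hg0 v
        gcongr
      linarith
    · have hv0 : 0 < ‖v‖ := hr0.trans hv
      have h1 : 0 ≤ r ^ 2 * g v := mul_nonneg (by positivity) (hg0 v)
      have h2 : ‖v‖ ^ 2 * g v ≤ N * ‖v‖ ^ (2 - β) := by
        have h3 : g v ≤ N * ‖v‖ ^ (-β) := (hgN v).trans
          (mul_le_mul_of_nonneg_left
            (Real.rpow_le_rpow_of_nonpos hv0 (by linarith) (by linarith)) hN)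
        calc ‖v‖ ^ 2 * g v ≤ ‖v‖ ^ 2 * (N * ‖v‖ ^ (-β)) := by gcongr
          _ = N * (‖v‖ ^ (2 : ℝ) * ‖v‖ ^ (-β)) := by rw [Real.rpow_two]; ring
          _ = N * ‖v‖ ^ (2 - β) := by rw [← Real.rpow_add hv0, sub_eq_add_neg]
      have h4 : r / 2 * (1 + ‖r⁻¹ • v‖) ≤ ‖v‖ := by
        rw [norm_smul, norm_inv, Real.norm_of_nonneg hr0.le]
        field_simp
        linarith
      have h5 : ‖v‖ ^ (2 - β) ≤ (r / 2) ^ (2 - β) * (1 + ‖r⁻¹ • v‖) ^ (-(β - 2)) := by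
        rw [neg_sub, ← Real.mul_rpow (by positivity) (by positivity)]
        exact Real.rpow_le_rpow_of_nonpos (by positivity) h4 (by linarith)
      have h6 := mul_le_mul_of_nonneg_left h5 hN
      rw [← mul_assoc] at h6
      linarith
  have hint := integral_mono hg2 ((hg.const_mul (r ^ 2)).add hI2) hpt
  simp only [Pi.add_apply] at hint
  rw [integral_add (hg.const_mul _) hI2, integral_const_mul, integral_const_mul,
    Measure.integral_comp_inv_smul_of_nonneg volume
      (fun w : E3 => (1 + ‖w‖) ^ (-(β - 2))) hr0.le, finrank_euclideanSpace, Fintype.card_fin,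
    integral_sq_norm_mul hgm hg0 hg hg2 hρ hT, smul_eq_mul, ← hJ] at hint
  change _ ≤ r ^ 2 * dens g + _ at hint
  have hTR : 3 * dens g * temp g = dens g * R ^ 2 / 2 := by rw [hRT]; ring
  have hru : 0 ≤ dens g * ‖bulk g‖ ^ 2 := by positivity
  have hrR : r ^ 2 * dens g = dens g * R ^ 2 / 4 := by rw [hr]; ring
  have hmain : dens g * R ^ 2 ≤ 4 * (N * (r / 2) ^ (2 - β) * (r ^ 3 * J)) := by linarith
  have hpow : 4 * (N * (r / 2) ^ (2 - β) * (r ^ 3 * J)) =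
      N * (2 ^ (2 * β - 5) * J) * R ^ (3 - β) * R ^ 2 := by
    have e1 : (r / 2) ^ (2 - β) = R ^ (2 - β) * 2 ^ (2 * β - 4) := by
      rw [hr, div_div, Real.div_rpow hR.le (by norm_num), div_eq_mul_inv,
        ← Real.rpow_neg (by norm_num), show (2 * 2 : ℝ) = 2 ^ (2 : ℝ) by norm_num,
        ← Real.rpow_mul (by norm_num)]
      congr 2
      ring
    have e2 : (2 : ℝ) ^ (2 * β - 4) = 2 ^ (2 * β - 5) * 2 := by
      rw [← Real.rpow_add_one (by norm_num)]
      congr 1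
      ring
    have e3 : R ^ (3 - β) = R ^ (2 - β) * R := by
      rw [← Real.rpow_add_one hR.ne']
      congr 1
      ring
    rw [e1, e2, e3, hr]
    ring
  rw [hpow] at hmain
  exact le_of_mul_le_mul_right hmain (by positivity)

end Moments

/-- A pointwise bound on `g` gives a weighted pointwise bound on its anisotropic Gaussian. -/
lemma weight_mul_aGauss_le {ν β N : ℝ} {g : E3 → ℝ} (hν1 : -(1 / 2 : ℝ) < ν) (hν2 : ν < 1)
    (hβ : 5 < β) (hN : 0 ≤ N) (hgm : Measurable g) (hg0 : ∀ v, 0 ≤ g v) (hg : Integrable g)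
    (hρ : 0 < dens g) (hg2 : Integrable fun v => ‖v‖ ^ 2 * g v) (hT : 0 < temp g)
    (hgN : ∀ v, g v ≤ N * (1 + ‖v‖) ^ (-β)) (v : E3) :
    (1 + ‖v‖) ^ β * aGauss g ν v ≤
      (2 * volume.real (Metric.ball (0 : E3) 1) +
          2 ^ (2 * β - 5) * ∫ w : E3, (1 + ‖w‖) ^ (-(β - 2))) *
        2 ^ β * Real.exp (β ^ 2 / 4) / √((π / 3 * min (1 - ν) (1 + 2 * ν)) ^ 3) * N := by
  set V := volume.real (Metric.ball (0 : E3) 1)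
  set J := ∫ w : E3, (1 + ‖w‖) ^ (-(β - 2)) with hJ
  set a := √((π / 3 * min (1 - ν) (1 + 2 * ν)) ^ 3)
  set K := Real.exp (β ^ 2 / 4)
  have hV : 0 ≤ V := measureReal_nonneg
  have hJ0 : 0 ≤ J := integral_nonneg fun w => by positivity
  have ha : 0 < a := by
    have : 0 < min (1 - ν) (1 + 2 * ν) := lt_min (by linarith) (by linarith)
    positivity
  obtain ⟨R, hR, hRT⟩ : ∃ R : ℝ, 0 < R ∧ R ^ 2 = 6 * temp g :=
    ⟨√(6 * temp g), by positivity, Real.sq_sqrt (by positivity)⟩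
  set s := ‖v - bulk g‖ / R with hs
  have hs0 : 0 ≤ s := by positivity
  have hK := one_add_rpow_mul_exp_neg_sq_le (by linarith : 0 ≤ β) hs0
  have hvs : ‖v‖ ≤ ‖bulk g‖ + R * s := by
    have : R * s = ‖v - bulk g‖ := by rw [hs]; field_simp
    rw [this]
    linarith [norm_sub_norm_le v (bulk g)]
  suffices ∃ L : ℝ, 0 < L ∧ 1 + ‖v‖ ≤ L * (1 + s) ∧
      dens g * L ^ β ≤ (2 * V + 2 ^ (2 * β - 5) * J) * 2 ^ β * N * R ^ 3 by
    obtain ⟨L, hL, hvL, hρL⟩ := this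
    calc (1 + ‖v‖) ^ β * aGauss g ν v
        ≤ (L ^ β * (1 + s) ^ β) * (dens g / (a * R ^ 3) * Real.exp (-s ^ 2)) := by
          rw [← Real.mul_rpow hL.le (by positivity)]
          refine mul_le_mul (Real.rpow_le_rpow (by positivity) hvL (by linarith))
            (aGauss_le hν1 hν2 hgm hg0 hρ hT hR hRT v) ?_ (by positivity)
          unfold aGauss
          positivity
      _ = dens g * L ^ β / (a * R ^ 3) * ((1 + s) ^ β * Real.exp (-s ^ 2)) := by ring
      _ ≤ (2 * V + 2 ^ (2 * β - 5) * J) * 2 ^ β * N * R ^ 3 / (a * R ^ 3) * K := by gcongr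
      _ = _ := by field_simp
  rcases le_or_gt (2 * R) (1 + ‖bulk g‖) with hu | hu
  · refine ⟨1 + ‖bulk g‖, by positivity, by nlinarith, ?_⟩
    have h := dens_le_of_le_bulk (by linarith) hN hg hg0 hρ hT hgN hR hRT hu
    have hL : (1 + ‖bulk g‖) ^ (-β) * (1 + ‖bulk g‖) ^ β = 1 := by
      rw [← Real.rpow_add (by positivity), neg_add_cancel, Real.rpow_zero]
    calc dens g * (1 + ‖bulk g‖) ^ β
        ≤ 2 * N * 2 ^ β * (1 + ‖bulk g‖) ^ (-β) * V * R ^ 3 * (1 + ‖bulk g‖) ^ β := by gcongr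
      _ = 2 * V * 2 ^ β * N * R ^ 3 * ((1 + ‖bulk g‖) ^ (-β) * (1 + ‖bulk g‖) ^ β) := by ring
      _ = 2 * V * 2 ^ β * N * R ^ 3 := by rw [hL, mul_one]
      _ ≤ _ := by
        gcongr
        exact le_add_of_nonneg_right (by positivity)
  · refine ⟨2 * R, by positivity, by nlinarith, ?_⟩
    have h := dens_le_of_sq_norm hβ hN hgm hg hg0 hg2 hρ hT hgN hR hRT
    rw [← hJ] at h
    have hL : R ^ (3 - β) * R ^ β = R ^ 3 := by
      rw [← Real.rpow_add hR, sub_add_cancel]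
      norm_cast
    calc dens g * (2 * R) ^ β
        ≤ N * (2 ^ (2 * β - 5) * J) * R ^ (3 - β) * (2 * R) ^ β := by gcongr
      _ = 2 ^ (2 * β - 5) * J * 2 ^ β * N * (R ^ (3 - β) * R ^ β) := by
        rw [Real.mul_rpow (by norm_num) hR.le]
        ring
      _ = 2 ^ (2 * β - 5) * J * 2 ^ β * N * R ^ 3 := by rw [hL]
      _ ≤ _ := by
        gcongr
        exact le_add_of_nonneg_left (by positivity)

/-- estimate (3.7): the weighted sup-norm of the anisotropic Gaussian is
controlled by the weighted sup-norm of `g`. -/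
theorem aGauss_weighted_bound
    (ν β : ℝ) (hν1 : -(1 / 2 : ℝ) < ν) (hν2 : ν < 1) (hβ : 5 < β) :
    ∃ Cβν > (0 : ℝ), ∀ g : E3 → ℝ,
      Measurable g → (∀ v, 0 ≤ g v) →
      Integrable g → 0 < dens g →
      Integrable (fun v => ‖v‖ ^ 2 * g v) → 0 < temp g →
      Nq β (aGauss g ν) ≤ ENNReal.ofReal Cβν * Nq β g := by
  set D := (2 * volume.real (Metric.ball (0 : E3) 1) +
      2 ^ (2 * β - 5) * ∫ w : E3, (1 + ‖w‖) ^ (-(β - 2))) *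
    2 ^ β * Real.exp (β ^ 2 / 4) / √((π / 3 * min (1 - ν) (1 + 2 * ν)) ^ 3)
  have hD : 0 ≤ D := by
    have : 0 ≤ ∫ w : E3, (1 + ‖w‖) ^ (-(β - 2)) := integral_nonneg fun w => by positivity
    positivity
  refine ⟨D + 1, by positivity, fun g hgm hg0 hg hρ hg2 hT => ?_⟩
  by_cases htop : Nq β g = ⊤
  · rw [htop, ENNReal.mul_top (ENNReal.ofReal_pos.2 (by positivity)).ne']
    exact le_top
  have hgN : ∀ v, g v ≤ (Nq β g).toReal * (1 + ‖v‖) ^ (-β) := by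
    intro v
    have h1 : (1 + ‖v‖) ^ β * g v ≤ (Nq β g).toReal :=
      (ENNReal.ofReal_le_iff_le_toReal htop).1
        (le_iSup (fun v : E3 => ENNReal.ofReal ((1 + ‖v‖) ^ β * g v)) v)
    rw [Real.rpow_neg (by positivity), ← div_eq_mul_inv, le_div_iff₀ (by positivity), mul_comm]
    exact h1
  refine iSup_le fun v => ?_
  rw [← ENNReal.ofReal_toReal htop, ← ENNReal.ofReal_mul (by positivity)]
  refine ENNReal.ofReal_le_ofReal ?_
  have h := weight_mul_aGauss_le hν1 hν2 hβ ENNReal.toReal_nonneg hgm hg0 hg hρ hg2 hT hgN v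
  linarith [(ENNReal.toReal_nonneg : 0 ≤ (Nq β g).toReal)]
end
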